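/- Let (X, f_{1,∞}) be a periodic non-autonomous system on a T₃ space X with induced map g having a transitive point. If x is a transitive point and there exists y ∈ X with (x,y) not a syndetic equicontinuity pair, then (X, f_{1,∞}) is thickly Hausdorff sensitive. Consequently, a minimal such system is either syndetically topologically equicontinuous or thickly Hausdorff sensitive. -/

import Mathlib

open Topology Filter Set
open scoped Uniformity

/-- `traj f n = f_n ∘ ⋯ ∘ f_1` (and `traj f 0 = id`), i.e. `f_1^n`. -/
def traj {X : Type*} (f : ℕ → X → X) : ℕ → X → X
  | 0 => id
  | n + 1 => f (n + 1) ∘ traj f n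

/-- The family `f` is periodic with period `p`. -/
def PeriodicFam {X : Type*} (f : ℕ → X → X) (p : ℕ) : Prop :=
  ∀ n, f (n + p) = f n

/-- A set of naturals is thick: it contains arbitrarily long blocks of consecutive integers. -/
def Thick (T : Set ℕ) : Prop :=
  ∀ k : ℕ, ∃ n : ℕ, ∀ i ≤ k, n + i ∈ T

/-- A set of naturals is syndetic: it has bounded gaps. -/
def Syndetic (S : Set ℕ) : Prop :=
  ∃ M : ℕ, ∀ n : ℕ, ∃ m ∈ S, n ≤ m ∧ m ≤ n + M

/-- `x` is a transitive point of the non-autonomous system `(X, f_{1,∞})`. -/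
def TransPt {X : Type*} [TopologicalSpace X] (f : ℕ → X → X) (x : X) : Prop :=
  Dense (Set.range fun n => traj f n x)

/-- `x` is a transitive point of the autonomous system `(X, g)`. -/
def TransPtAut {X : Type*} [TopologicalSpace X] (g : X → X) (x : X) : Prop :=
  Dense (Set.range fun n => g^[n] x)

/-- `x` is an equicontinuity point of `(X, f_{1,∞})` on a uniform space. -/
def EqPt {X : Type*} [UniformSpace X] (f : ℕ → X → X) (x : X) : Prop :=
  ∀ E ∈ 𝓤 X, ∃ D ∈ 𝓤 X, ∀ y : X, (x, y) ∈ D → ∀ n : ℕ, (traj f n x, traj f n y) ∈ E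

/-- `x` is a syndetically equicontinuous point of `(X, f_{1,∞})`. -/
def SynEqPt {X : Type*} [UniformSpace X] (f : ℕ → X → X) (x : X) : Prop :=
  ∀ E ∈ 𝓤 X, ∃ U ∈ 𝓝 x,
    Syndetic {n : ℕ | ∀ x₁ ∈ U, ∀ x₂ ∈ U, (traj f n x₁, traj f n x₂) ∈ E}

/-- `x` is a syndetically equicontinuous point of the autonomous system `(X, g)`. -/
def SynEqPtAut {X : Type*} [UniformSpace X] (g : X → X) (x : X) : Prop :=
  ∀ E ∈ 𝓤 X, ∃ U ∈ 𝓝 x,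
    Syndetic {n : ℕ | ∀ x₁ ∈ U, ∀ x₂ ∈ U, (g^[n] x₁, g^[n] x₂) ∈ E}

/-- `N(U, D)` for the non-autonomous system. -/
def NSet {X : Type*} (f : ℕ → X → X) (U : Set X) (D : Set (X × X)) : Set ℕ :=
  {n : ℕ | 0 < n ∧ ∃ x ∈ U, ∃ y ∈ U, (traj f n x, traj f n y) ∉ D}

/-- `N(U, D)` for the autonomous system. -/
def NSetAut {X : Type*} (g : X → X) (U : Set X) (D : Set (X × X)) : Set ℕ :=
  {n : ℕ | 0 < n ∧ ∃ x ∈ U, ∃ y ∈ U, (g^[n] x, g^[n] y) ∉ D}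

/-- Sensitivity of `(X, f_{1,∞})`. -/
def Sensitive {X : Type*} [UniformSpace X] (f : ℕ → X → X) : Prop :=
  ∃ D ∈ 𝓤 X, ∀ U : Set X, IsOpen U → U.Nonempty → (NSet f U D).Nonempty

/-- Thick sensitivity of `(X, f_{1,∞})`. -/
def ThickSensitive {X : Type*} [UniformSpace X] (f : ℕ → X → X) : Prop :=
  ∃ D ∈ 𝓤 X, ∀ U : Set X, IsOpen U → U.Nonempty → Thick (NSet f U D)

/-- Thick sensitivity of the autonomous system `(X, g)`. -/
def ThickSensitiveAut {X : Type*} [UniformSpace X] (g : X → X) : Prop :=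
  ∃ D ∈ 𝓤 X, ∀ U : Set X, IsOpen U → U.Nonempty → Thick (NSetAut g U D)

/-- Multi-sensitivity of `(X, f_{1,∞})`. -/
def MultiSensitive {X : Type*} [UniformSpace X] (f : ℕ → X → X) : Prop :=
  ∃ D ∈ 𝓤 X, ∀ (k : ℕ) (U : Fin (k + 1) → Set X),
    (∀ i, IsOpen (U i)) → (∀ i, (U i).Nonempty) → (⋂ i, NSet f (U i) D).Nonempty

/-- Multi-sensitivity of the autonomous system `(X, g)`. -/
def MultiSensitiveAut {X : Type*} [UniformSpace X] (g : X → X) : Prop :=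
  ∃ D ∈ 𝓤 X, ∀ (k : ℕ) (U : Fin (k + 1) → Set X),
    (∀ i, IsOpen (U i)) → (∀ i, (U i).Nonempty) → (⋂ i, NSetAut g (U i) D).Nonempty

/-- Eventual sensitivity of `(X, f_{1,∞})` with a given entourage `D`. -/
def EvSensitiveWith {X : Type*} [UniformSpace X] (f : ℕ → X → X) (D : Set (X × X)) : Prop :=
  ∀ x : X, ∀ E ∈ 𝓤 X, ∃ n k : ℕ, 0 < n ∧ 0 < k ∧
    ∃ y : X, (traj f n x, y) ∈ E ∧ (traj f (n + k) x, traj f k y) ∉ D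

/-- Eventual sensitivity of `(X, f_{1,∞})`. -/
def EvSensitive {X : Type*} [UniformSpace X] (f : ℕ → X → X) : Prop :=
  ∃ D ∈ 𝓤 X, EvSensitiveWith f D

/-- Eventual sensitivity of the autonomous system `(X, g)` with entourage `D`. -/
def EvSensitiveAutWith {X : Type*} [UniformSpace X] (g : X → X) (D : Set (X × X)) : Prop :=
  ∀ x : X, ∀ E ∈ 𝓤 X, ∃ q k : ℕ, 0 < q ∧ 0 < k ∧
    ∃ y : X, (g^[q] x, y) ∈ E ∧ (g^[q + k] x, g^[k] y) ∉ D

/-- `(x, y)` is a (topological) equicontinuity pair for `(X, f_{1,∞})`. -/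
def EqPair {X : Type*} [TopologicalSpace X] (f : ℕ → X → X) (x y : X) : Prop :=
  ∀ O ∈ 𝓝 y, ∃ U ∈ 𝓝 x, ∃ V ∈ 𝓝 y, ∀ n : ℕ, 0 < n →
    ((traj f n '' U) ∩ V).Nonempty → traj f n '' U ⊆ O

/-- `(x, y)` is a syndetic equicontinuity pair for `(X, f_{1,∞})`. -/
def SynEqPair {X : Type*} [TopologicalSpace X] (f : ℕ → X → X) (x y : X) : Prop :=
  ∀ O ∈ 𝓝 y, ∃ U ∈ 𝓝 x, ∃ V ∈ 𝓝 y,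
    Syndetic {n : ℕ | ((traj f n '' U) ∩ V).Nonempty → traj f n '' U ⊆ O}

/-- `O` is a splitting neighborhood of `y` with respect to `x`. -/
def SplittingNbhd {X : Type*} [TopologicalSpace X] (f : ℕ → X → X) (x y : X) (O : Set X) :
    Prop :=
  O ∈ 𝓝 y ∧ ∀ U ∈ 𝓝 x, ∀ V ∈ 𝓝 y, ∃ n : ℕ, 0 < n ∧
    ((traj f n '' U) ∩ V).Nonempty ∧ ¬ traj f n '' U ⊆ O

/-- A finite open cover of `X`. -/
def IsFinOpenCover {X : Type*} [TopologicalSpace X] (𝒰 : Finset (Set X)) : Prop :=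
  (∀ U ∈ 𝒰, IsOpen U) ∧ ⋃₀ (↑𝒰 : Set (Set X)) = Set.univ

/-- `N(V, 𝒰)`: times at which `f_1^n(V)` is not contained in any single member of `𝒰`. -/
def HNSet {X : Type*} (f : ℕ → X → X) (V : Set X) (𝒰 : Finset (Set X)) : Set ℕ :=
  {n : ℕ | 0 < n ∧ ∀ U ∈ 𝒰, ¬ traj f n '' V ⊆ U}

/-- `N(V, 𝒰)` for the autonomous system. -/
def HNSetAut {X : Type*} (g : X → X) (V : Set X) (𝒰 : Finset (Set X)) : Set ℕ :=
  {n : ℕ | 0 < n ∧ ∀ U ∈ 𝒰, ¬ g^[n] '' V ⊆ U}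

/-- Hausdorff sensitivity of `(X, f_{1,∞})`. -/
def HSensitive {X : Type*} [TopologicalSpace X] (f : ℕ → X → X) : Prop :=
  ∃ 𝒰 : Finset (Set X), IsFinOpenCover 𝒰 ∧
    ∀ V : Set X, IsOpen V → V.Nonempty → (HNSet f V 𝒰).Nonempty

/-- Hausdorff sensitivity of the autonomous system `(X, g)`. -/
def HSensitiveAut {X : Type*} [TopologicalSpace X] (g : X → X) : Prop :=
  ∃ 𝒰 : Finset (Set X), IsFinOpenCover 𝒰 ∧
    ∀ V : Set X, IsOpen V → V.Nonempty → (HNSetAut g V 𝒰).Nonempty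

/-- Thick Hausdorff sensitivity of `(X, f_{1,∞})`. -/
def ThickHSensitive {X : Type*} [TopologicalSpace X] (f : ℕ → X → X) : Prop :=
  ∃ 𝒰 : Finset (Set X), IsFinOpenCover 𝒰 ∧
    ∀ V : Set X, IsOpen V → V.Nonempty → Thick (HNSet f V 𝒰)

/-- Thick Hausdorff sensitivity of the autonomous system `(X, g)`. -/
def ThickHSensitiveAut {X : Type*} [TopologicalSpace X] (g : X → X) : Prop :=
  ∃ 𝒰 : Finset (Set X), IsFinOpenCover 𝒰 ∧
    ∀ V : Set X, IsOpen V → V.Nonempty → Thick (HNSetAut g V 𝒰)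

/-- Multi-Hausdorff sensitivity of the autonomous system `(X, g)`. -/
def MultiHSensitiveAut {X : Type*} [TopologicalSpace X] (g : X → X) : Prop :=
  ∃ 𝒰 : Finset (Set X), IsFinOpenCover 𝒰 ∧
    ∀ (m : ℕ) (V : Fin (m + 1) → Set X),
      (∀ i, IsOpen (V i)) → (∀ i, (V i).Nonempty) → (⋂ i, HNSetAut g (V i) 𝒰).Nonempty

theorem aux_cont {X : Type*} [TopologicalSpace X] (f : ℕ → X → X) (hf : ∀ n, Continuous (f n))
    (n : ℕ) : Continuous (traj f n) := by
  induction n with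
  | zero => exact continuous_id
  | succ n ih => exact (hf (n + 1)).comp ih

theorem aux_factor {X : Type*} [TopologicalSpace X] (f : ℕ → X → X) (hf : ∀ n, Continuous (f n))
    (m d : ℕ) : ∃ h : X → X, Continuous h ∧ traj f (m + d) = h ∘ traj f m := by
  induction d with
  | zero => exact ⟨id, continuous_id, rfl⟩
  | succ d ih =>
    obtain ⟨h, hc, he⟩ := ih
    refine ⟨f (m + d + 1) ∘ h, (hf _).comp hc, ?_⟩
    change f (m + d + 1) ∘ traj f (m + d) = _
    rw [he]; rfl

theorem aux_add {X : Type*} (f : ℕ → X → X) (p : ℕ) (hper : PeriodicFam f p) (n : ℕ) :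
    traj f (n + p) = traj f n ∘ traj f p := by
  induction n with
  | zero => rw [Nat.zero_add]; rfl
  | succ n ih =>
    have h : n + 1 + p = n + p + 1 := by omega
    rw [h]
    change f (n + p + 1) ∘ traj f (n + p) = f (n + 1) ∘ traj f n ∘ traj f p
    rw [ih, ← h, hper (n + 1)]

theorem aux_iter {X : Type*} (f : ℕ → X → X) (p : ℕ) (hper : PeriodicFam f p) (n k : ℕ) (x : X) :
    traj f (n + p * k) x = traj f n ((traj f p)^[k] x) := by
  induction k generalizing x with
  | zero => rfl
  | succ k ih =>
    have h : n + p * (k + 1) = (n + p * k) + p := by ring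
    rw [h, aux_add f p hper, Function.comp, ih, Function.iterate_succ_apply]

theorem aux_dense {X ι : Type*} [TopologicalSpace X] (A : ι → Set X) (hA : ∀ i, IsClosed (A i))
    (s : Finset ι) (h : ∀ i ∈ s, interior (A i) = ∅) : Dense (⋂ i ∈ s, (A i)ᶜ) := by
  classical
  induction s using Finset.induction_on with
  | empty => simp
  | insert a s ha ih =>
    rw [Finset.set_biInter_insert]
    refine Dense.inter_of_isOpen_left ?_ ?_ (hA a).isOpen_compl
    · exact interior_eq_empty_iff_dense_compl.1 (h a (Finset.mem_insert_self _ _))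
    · exact ih fun i hi => h i (Finset.mem_insert_of_mem hi)

/-- A transitive point whose system has an isolated point gives only syndetic pairs. -/
theorem aux_isolated {X : Type*} [TopologicalSpace X] (f : ℕ → X → X)
    (hf : ∀ n, Continuous (f n)) (w : X) (hw : IsOpen ({w} : Set X)) (x y : X)
    (hx : TransPt f x) : SynEqPair f x y := by
  intro O hO
  obtain ⟨_, hm, m, rfl⟩ := hx.inter_open_nonempty _ hw ⟨w, rfl⟩
  have hm' : traj f m x = w := hm
  refine ⟨traj f m ⁻¹' {w}, (hw.preimage (aux_cont f hf m)).mem_nhds hm, O, hO, m, fun n =>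
    ⟨n + m, ?_, by omega, le_rfl⟩⟩
  obtain ⟨h, -, he⟩ := aux_factor f hf m n
  rw [Nat.add_comm n m]
  rintro ⟨_, ⟨u, hu, rfl⟩, huO⟩ _ ⟨v, hv, rfl⟩
  have hu' : traj f m u = w := hu
  have hv' : traj f m v = w := hv
  rw [he, Function.comp, hu'] at huO
  rw [he, Function.comp, hv']
  exact huO

/-- Without isolated points, a transitive point is transitive for the induced map. -/
theorem aux_trans {X : Type*} [TopologicalSpace X] [T1Space X] (f : ℕ → X → X)
    (hf : ∀ n, Continuous (f n)) (p : ℕ) (hp : 0 < p) (hper : PeriodicFam f p)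
    (hiso : ∀ w : X, ¬ IsOpen ({w} : Set X)) (x z : X) (hx : TransPt f x)
    (hz : TransPtAut (traj f p) z) : TransPtAut (traj f p) x := by
  classical
  let A : ℕ → Set X := fun i => closure (range fun l => traj f i ((traj f p)^[l] x))
  have hA : ∀ i, IsClosed (A i) := fun i => isClosed_closure
  have key : ∃ i < p, (interior (A i)).Nonempty := by
    by_contra! hcon
    have hd := aux_dense A hA (Finset.range p) fun i hi => hcon i (Finset.mem_range.1 hi)
    have ho : IsOpen (⋂ i ∈ Finset.range p, (A i)ᶜ) :=
      isOpen_biInter_finset fun i _ => (hA i).isOpen_compl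
    have hne : (⋂ i ∈ Finset.range p, (A i)ᶜ).Nonempty := by
      obtain ⟨a, ha, -⟩ := hd.inter_open_nonempty _ isOpen_univ ⟨x, trivial⟩ |>.imp fun a h => h.symm
      exact ⟨a, ha⟩
    obtain ⟨_, hn, n, rfl⟩ := hx.inter_open_nonempty _ ho hne
    have h1 := mem_iInter₂.1 hn (n % p) (Finset.mem_range.2 (Nat.mod_lt _ hp))
    apply h1
    apply subset_closure
    refine ⟨n / p, ?_⟩
    change traj f (n % p) ((traj f p)^[n / p] x) = traj f n x
    rw [← aux_iter f p hper, Nat.mod_add_div]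
  obtain ⟨i, hip, hi⟩ := key
  have hAZ : A i ⊆ closure (range fun l => traj f i ((traj f p)^[l] z)) := by
    refine closure_minimal ?_ isClosed_closure
    rintro _ ⟨l, rfl⟩
    have := (aux_cont f hf i).range_subset_closure_image_dense hz ⟨(traj f p)^[l] x, rfl⟩
    rwa [← range_comp] at this
  obtain ⟨a, ha⟩ := hi
  obtain ⟨_, hk, k, rfl⟩ := mem_closure_iff.1 (hAZ (interior_subset ha)) _ isOpen_interior ha
  have hk' : traj f i ((traj f p)^[k] z) ∈ A i := interior_subset hk
  have hstep : (traj f p)^[k + 1] z ∈ A 0 := by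
    obtain ⟨h, hc, he⟩ := aux_factor f hf i (p - i)
    rw [Nat.add_sub_cancel' hip.le] at he
    have h2 := image_closure_subset_closure_image hc (mem_image_of_mem h hk')
    have h3 : h (traj f i ((traj f p)^[k] z)) = (traj f p)^[k + 1] z := by
      rw [Function.iterate_succ_apply']
      exact (congrFun he _).symm
    rw [h3] at h2
    refine closure_mono ?_ h2
    rintro _ ⟨_, ⟨l, rfl⟩, rfl⟩
    refine ⟨l + 1, ?_⟩
    change (traj f p)^[l + 1] x = h (traj f i ((traj f p)^[l] x))
    rw [Function.iterate_succ_apply']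
    exact congrFun he _
  have htail : ∀ j, (traj f p)^[j] ((traj f p)^[k + 1] z) ∈ A 0 := by
    intro j
    have h2 := image_closure_subset_closure_image ((aux_cont f hf p).iterate j)
      (mem_image_of_mem _ hstep)
    refine closure_mono ?_ h2
    rintro _ ⟨_, ⟨l, rfl⟩, rfl⟩
    refine ⟨j + l, ?_⟩
    change (traj f p)^[j + l] x = (traj f p)^[j] ((traj f p)^[l] x)
    rw [Function.iterate_add_apply]
  haveI : ∀ w : X, NeBot (𝓝[≠] w) := fun w => by
    rw [neBot_iff]
    intro h
    exact hiso w (isOpen_singleton_iff_punctured_nhds w |>.2 h)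
  have hd := Dense.diff_finset hz ((Finset.range (k + 1)).image fun l => (traj f p)^[l] z)
  have hall : Dense (A 0) := by
    refine hd.mono ?_
    rintro _ ⟨⟨l, rfl⟩, hl⟩
    have hlk : k + 1 ≤ l := by
      by_contra hlt
      apply hl
      rw [Finset.mem_coe, Finset.mem_image]
      exact ⟨l, Finset.mem_range.2 (by omega), rfl⟩
    have := htail (l - (k + 1))
    rw [← Function.iterate_add_apply, Nat.sub_add_cancel hlk] at this
    exact this
  exact dense_closure.1 hall

theorem aux_main {X : Type*} [TopologicalSpace X] [T3Space X]
    (f : ℕ → X → X) (hf : ∀ n, Continuous (f n))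
    (p : ℕ) (hp : 0 < p) (hper : PeriodicFam f p)
    (htrans : ∃ x, TransPtAut (traj f p) x) (x : X) (hx : TransPt f x)
    (hy : ∃ y : X, ¬ SynEqPair f x y) : ThickHSensitive f := by
  classical
  obtain ⟨z, hz⟩ := htrans
  obtain ⟨y, hy⟩ := hy
  have hxt := aux_trans f hf p hp hper
    (fun w hw => hy (aux_isolated f hf w hw x y hx)) x z hx hz
  unfold SynEqPair at hy
  push Not at hy
  obtain ⟨O, hO, hsp⟩ := hy
  obtain ⟨C, hC, hCc, hCO⟩ := exists_mem_nhds_isClosed_subset (interior_mem_nhds.2 hO)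
  refine ⟨{interior O, Cᶜ}, ⟨?_, ?_⟩, ?_⟩
  · intro U hU
    rw [Finset.mem_insert, Finset.mem_singleton] at hU
    rcases hU with rfl | rfl
    · exact isOpen_interior
    · exact hCc.isOpen_compl
  · rw [eq_univ_iff_forall]
    intro a
    by_cases ha : a ∈ C
    · exact ⟨interior O, by simp, hCO ha⟩
    · exact ⟨Cᶜ, by simp, ha⟩
  · intro W hW hWne k
    obtain ⟨_, hm, m, rfl⟩ := hxt.inter_open_nonempty _ hW hWne
    have hU : (traj f p)^[m] ⁻¹' W ∈ 𝓝 x :=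
      (hW.preimage ((aux_cont f hf p).iterate m)).mem_nhds hm
    have hs := hsp _ hU C hC
    unfold Syndetic at hs
    push Not at hs
    obtain ⟨n, hn⟩ := hs (k + p * m + 1)
    refine ⟨n + 1, fun i hi => ⟨by omega, ?_⟩⟩
    have h1 : n + 1 + i + p * m ∉ {n : ℕ | ((traj f n '' ((traj f p)^[m] ⁻¹' W)) ∩ C).Nonempty →
        traj f n '' ((traj f p)^[m] ⁻¹' W) ⊆ O} := fun hmem => by
      have := hn _ hmem (by omega)
      omega
    rw [mem_setOf_eq, Classical.not_imp] at h1
    obtain ⟨⟨_, ⟨u, hu, rfl⟩, huC⟩, hnot⟩ := h1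
    rw [aux_iter f p hper] at huC
    intro U hUm hsub
    rw [Finset.mem_insert, Finset.mem_singleton] at hUm
    rcases hUm with rfl | rfl
    · apply hnot
      rintro _ ⟨v, hv, rfl⟩
      rw [aux_iter f p hper]
      exact interior_subset (hsub ⟨_, hv, rfl⟩)
    · exact hsub ⟨_, hu, rfl⟩ huC

theorem thickHSensitive_or_synTopEq {X : Type*} [TopologicalSpace X] [T3Space X]
    (f : ℕ → X → X) (hf : ∀ n, Continuous (f n))
    (p : ℕ) (hp : 0 < p) (hper : PeriodicFam f p)
    (htrans : ∃ x, TransPtAut (traj f p) x) :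
    (∀ x : X, TransPt f x → (∃ y : X, ¬ SynEqPair f x y) → ThickHSensitive f) ∧
    ((∀ x : X, TransPt f x) → (∀ x y : X, SynEqPair f x y) ∨ ThickHSensitive f) := by
  refine ⟨fun x hx hy => aux_main f hf p hp hper htrans x hx hy, fun hmin => ?_⟩
  by_cases h : ∀ x y : X, SynEqPair f x y
  · exact Or.inl h
  · push Not at h
    obtain ⟨x, y, hxy⟩ := h
    exact Or.inr (aux_main f hf p hp hper htrans x (hmin x) ⟨y, hxy⟩)
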